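/- arXiv:2004.13978 — 9 statements merged into one kernel-verified Lean document; each statement's English description precedes it below -/
import Mathlib

section
/- Let {Y_i}_{i∈V} together with I be a feasible SDP solution for the Densest k-Subgraph relaxation, let T ⊆ V be nonempty, and let ε ∈ [0,1] be such that (1/|T|) Σ_{i∈T} ‖Y_i‖² ≥ 1 − ε. Then (1/|T|²) Σ_{i∈T} Σ_{j∈T} ⟨Y_i, Y_j⟩ ≥ 1 − 4ε. -/
open RealInnerProductSpace Finset

/-!
The sum `S = ∑ i ∈ T, Y i` satisfies `⟪S, I⟫ = ∑ i ∈ T, ‖Y i‖ ^ 2` and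
`‖S‖ ^ 2 = ∑ i ∈ T, ∑ j ∈ T, ⟪Y i, Y j⟫`, so by Cauchy–Schwarz the average of the `⟪Y i, Y j⟫` is
at least `a ^ 2`, where `a` is the average of the `‖Y i‖ ^ 2`. Finally `a ^ 2 ≥ 2 * a - 1`, which
is at least `1 - 2 * ε` as `a ≥ 1 - ε`.
-/

section InnerProductSpace

variable {ι E : Type*} [SeminormedAddCommGroup E] [InnerProductSpace ℝ E]

lemma sum_sum_inner_eq_norm_sum_sq (s : Finset ι) (v : ι → E) :
    ∑ i ∈ s, ∑ j ∈ s, ⟪v i, v j⟫ = ‖∑ i ∈ s, v i‖ ^ 2 := by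
  simp_rw [← real_inner_self_eq_norm_sq, sum_inner, inner_sum]

lemma sq_sum_inner_le_sum_sum_inner_mul_norm_sq (s : Finset ι) (v : ι → E) (u : E) :
    (∑ i ∈ s, ⟪v i, u⟫) ^ 2 ≤ (∑ i ∈ s, ∑ j ∈ s, ⟪v i, v j⟫) * ‖u‖ ^ 2 := by
  rw [sum_sum_inner_eq_norm_sum_sq, ← sum_inner, ← mul_pow]
  exact sq_le_sq.2 ((abs_real_inner_le_norm _ _).trans (le_abs_self _))

lemma sq_sum_norm_sq_le_sum_sum_inner (s : Finset ι) (v : ι → E) (u : E)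
    (hu : ‖u‖ ≤ 1) (hv : ∀ i ∈ s, ⟪v i, u⟫ = ‖v i‖ ^ 2) :
    (∑ i ∈ s, ‖v i‖ ^ 2) ^ 2 ≤ ∑ i ∈ s, ∑ j ∈ s, ⟪v i, v j⟫ := by
  have gram_nonneg : 0 ≤ ∑ i ∈ s, ∑ j ∈ s, ⟪v i, v j⟫ := by
    rw [sum_sum_inner_eq_norm_sum_sq]
    positivity
  calc (∑ i ∈ s, ‖v i‖ ^ 2) ^ 2
      = (∑ i ∈ s, ⟪v i, u⟫) ^ 2 := by rw [sum_congr rfl hv]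
    _ ≤ (∑ i ∈ s, ∑ j ∈ s, ⟪v i, v j⟫) * ‖u‖ ^ 2 :=
      sq_sum_inner_le_sum_sum_inner_mul_norm_sq s v u
    _ ≤ ∑ i ∈ s, ∑ j ∈ s, ⟪v i, v j⟫ :=
      mul_le_of_le_one_right gram_nonneg (pow_le_one₀ (norm_nonneg u) hu)

theorem stmt_0_general (Y : ι → E) (I : E) (T : Finset ι) (hT : T.Nonempty)
    (hYI : ∀ i ∈ T, ⟪Y i, I⟫ = ‖Y i‖ ^ 2) (hInorm : ‖I‖ ≤ 1) (ε : ℝ)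
    (havg : 1 - ε ≤ (1 / (T.card : ℝ)) * ∑ i ∈ T, ‖Y i‖ ^ 2) :
    1 - 2 * ε ≤ (1 / (T.card : ℝ) ^ 2) * ∑ i ∈ T, ∑ j ∈ T, ⟪Y i, Y j⟫ := by
  have card_pos : (0 : ℝ) < T.card := by exact_mod_cast hT.card_pos
  rw [one_div_mul_eq_div, le_div_iff₀ card_pos] at havg
  rw [one_div_mul_eq_div, le_div_iff₀ (pow_pos card_pos 2)]
  calc (1 - 2 * ε) * (T.card : ℝ) ^ 2
      = 2 * ((1 - ε) * T.card) * T.card - (T.card : ℝ) ^ 2 := by ring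
    _ ≤ 2 * (∑ i ∈ T, ‖Y i‖ ^ 2) * T.card - (T.card : ℝ) ^ 2 := by gcongr
    _ ≤ (∑ i ∈ T, ‖Y i‖ ^ 2) ^ 2 := sub_le_iff_le_add.2 (two_mul_le_add_sq _ _)
    _ ≤ ∑ i ∈ T, ∑ j ∈ T, ⟪Y i, Y j⟫ := sq_sum_norm_sq_le_sum_sum_inner T Y I hInorm hYI

end InnerProductSpace

theorem stmt_0 {n m : ℕ} (hn : 1 ≤ n) (k : ℝ) (hk : 0 < k)
    (Y : Fin n → EuclideanSpace ℝ (Fin m)) (I : EuclideanSpace ℝ (Fin m))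
    (hsum : ∑ i, ‖Y i‖ ^ 2 = k)
    (hrow : ∀ i, ∑ j, ⟪Y i, Y j⟫ ≤ k * ‖Y i‖ ^ 2)
    (hnn : ∀ i j, 0 ≤ ⟪Y i, Y j⟫)
    (hle1 : ∀ i j, ⟪Y i, Y j⟫ ≤ ‖Y i‖ ^ 2)
    (hle2 : ∀ i j, ⟪Y i, Y j⟫ ≤ ‖Y j‖ ^ 2)
    (hnorm1 : ∀ i, ‖Y i‖ ^ 2 ≤ 1)
    (hYI : ∀ i, ⟪Y i, I⟫ = ‖Y i‖ ^ 2)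
    (hInorm : ‖I‖ = 1)
    (T : Finset (Fin n)) (hT : T.Nonempty)
    (ε : ℝ) (hε0 : 0 ≤ ε) (hε1 : ε ≤ 1)
    (havg : 1 - ε ≤ (1 / (T.card : ℝ)) * ∑ i ∈ T, ‖Y i‖ ^ 2) :
    1 - 4 * ε ≤ (1 / (T.card : ℝ) ^ 2) * ∑ i ∈ T, ∑ j ∈ T, ⟪Y i, Y j⟫ := by
  linarith [stmt_0_general Y I T hT (fun i _ ↦ hYI i) hInorm.le ε havg]
end

section
/- Let {X_i}_{i∈V} together with I be a feasible SDP solution for the Densest k-Subgraph relaxation, where k is a positive integer, and let S ⊆ V with |S| = k. Then Σ_{i∈S} Σ_{j∈V∖S} ⟨X_i, X_j⟩ ≤ 3k²·(1 − (1/k) Σ_{i∈S} ‖X_i‖²). -/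
open RealInnerProductSpace Finset

theorem sum_sum_le_card_nsmul_sum {ι κ M : Type*} [AddCommMonoid M] [PartialOrder M]
    [IsOrderedAddMonoid M] (s : Finset ι) (t : Finset κ) {f : ι → κ → M} {g : κ → M}
    (hfg : ∀ i ∈ s, ∀ j ∈ t, f i j ≤ g j) :
    ∑ i ∈ s, ∑ j ∈ t, f i j ≤ #s • ∑ j ∈ t, g j :=
  sum_le_card_nsmul s _ _ fun i hi => sum_le_sum (hfg i hi)

theorem stmt_2_general {V K : Type*} [Fintype V] [DecidableEq V] [Field K] [LinearOrder K]
    [IsStrictOrderedRing K] {k : ℕ} (hk : 0 < k) {G : V → V → K} {w : V → K}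
    (hsum : ∑ i, w i = (k : K)) {S : Finset V} (hS : #S = k)
    (hGw : ∀ i ∈ S, ∀ j ∈ Sᶜ, G i j ≤ w j) :
    ∑ i ∈ S, ∑ j ∈ Sᶜ, G i j ≤ (k : K) ^ 2 * (1 - (1 / (k : K)) * ∑ i ∈ S, w i) := by
  have hk' : (k : K) ≠ 0 := Nat.cast_ne_zero.mpr hk.ne'
  have hcompl : ∑ j ∈ Sᶜ, w j = k - ∑ i ∈ S, w i :=
    eq_sub_of_add_eq' ((sum_add_sum_compl S w).trans hsum)
  calc ∑ i ∈ S, ∑ j ∈ Sᶜ, G i j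
      ≤ #S • ∑ j ∈ Sᶜ, w j := sum_sum_le_card_nsmul_sum S Sᶜ hGw
    _ = k * (k - ∑ i ∈ S, w i) := by rw [hS, hcompl, nsmul_eq_mul]
    _ = (k : K) ^ 2 * (1 - (1 / (k : K)) * ∑ i ∈ S, w i) := by field_simp

theorem stmt_2 {n m : ℕ} (hn : 1 ≤ n) (k : ℕ) (hk : 0 < k)
    (X : Fin n → EuclideanSpace ℝ (Fin m)) (I : EuclideanSpace ℝ (Fin m))
    (hsum : ∑ i, ‖X i‖ ^ 2 = (k : ℝ))
    (hrow : ∀ i, ∑ j, ⟪X i, X j⟫ ≤ (k : ℝ) * ‖X i‖ ^ 2)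
    (hnn : ∀ i j, 0 ≤ ⟪X i, X j⟫)
    (hle1 : ∀ i j, ⟪X i, X j⟫ ≤ ‖X i‖ ^ 2)
    (hle2 : ∀ i j, ⟪X i, X j⟫ ≤ ‖X j‖ ^ 2)
    (hnorm1 : ∀ i, ‖X i‖ ^ 2 ≤ 1)
    (hXI : ∀ i, ⟪X i, I⟫ = ‖X i‖ ^ 2)
    (hInorm : ‖I‖ = 1)
    (S : Finset (Fin n)) (hS : S.card = k) :
    ∑ i ∈ S, ∑ j ∈ Sᶜ, ⟪X i, X j⟫ ≤
      3 * (k : ℝ) ^ 2 * (1 - (1 / (k : ℝ)) * ∑ i ∈ S, ‖X i‖ ^ 2) := by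
  have hcut := stmt_2_general hk hsum hS fun i _ j _ => hle2 i j
  linarith [sum_nonneg fun i (_ : i ∈ S) => sum_nonneg fun j (_ : j ∈ Sᶜ) => hnn i j]
end

section
/- Let {X_i}_{i∈V} together with I be a feasible SDP solution for the Densest k-Subgraph relaxation, where k is a positive integer, and let S ⊆ V with |S| = k. Let B be a symmetric n×n real matrix such that B_{ij} = 0 whenever both i, j ∈ S or both i, j ∈ V∖S, and let ‖B‖ denote its spectral norm (operator 2-norm). Setting μ := (1/k) Σ_{i∈S} ‖X_i‖², one has Σ_{i∈V} Σ_{j∈V} B_{ij} ⟨X_i, X_j⟩ ≤ 2k‖B‖·√(μ(1 − μ)). -/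
open RealInnerProductSpace Finset

/-!
A matrix `A` acts on tuples of vectors of an inner product space `E` by
`(A Y) i = ∑ j, A i j • Y j`. In an orthonormal basis this is `A` acting separately on each
coordinate, so as an operator between the `ℓ²` sums of copies of `E` it has norm at most `‖A‖`, and
by Cauchy–Schwarz the form `∑ i, ∑ j, A i j ⟪X i, Y j⟫` is bounded by `‖A‖` times the `ℓ²` norms
of the two tuples. A block off-diagonal `B` only couples the vectors indexed by `S` with those
indexed by `Sᶜ`, whose squared `ℓ²` norms are `k μ` and `k (1 - μ)`.
-/

section MatrixInnerForm

open scoped Matrix.Norms.L2Operator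

variable {𝕜 E m n : Type*} [RCLike 𝕜] [NormedAddCommGroup E] [InnerProductSpace 𝕜 E]
  [Fintype m] [Fintype n] [DecidableEq n]

theorem sum_norm_sq_mulVec_le (A : Matrix m n 𝕜) (x : n → 𝕜) :
    ∑ i, ‖(A.mulVec x) i‖ ^ 2 ≤ ‖A‖ ^ 2 * ∑ j, ‖x j‖ ^ 2 := by
  have h := A.l2_opNorm_mulVec (WithLp.toLp 2 x)
  simpa only [mul_pow, EuclideanSpace.norm_sq_eq, PiLp.coe_symm_continuousLinearEquiv] using
    pow_le_pow_left₀ (norm_nonneg _) h 2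

theorem sum_norm_sq_sum_smul_le_of_finiteDimensional [FiniteDimensional 𝕜 E]
    (A : Matrix m n 𝕜) (Y : n → E) :
    ∑ i, ‖∑ j, A i j • Y j‖ ^ 2 ≤ ‖A‖ ^ 2 * ∑ j, ‖Y j‖ ^ 2 := by
  let b := stdOrthonormalBasis 𝕜 E
  have inner_row (c) (i : m) :
      inner 𝕜 (b c) (∑ j, A i j • Y j) = A.mulVec (fun j => inner 𝕜 (b c) (Y j)) i := by
    simp only [inner_sum, inner_smul_right, Matrix.mulVec, dotProduct]
  calc ∑ i, ‖∑ j, A i j • Y j‖ ^ 2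
      = ∑ c, ∑ i, ‖A.mulVec (fun j => inner 𝕜 (b c) (Y j)) i‖ ^ 2 := by
        simp only [← b.sum_sq_norm_inner_right (∑ j, A _ j • Y j), inner_row]
        exact sum_comm
    _ ≤ ∑ c, ‖A‖ ^ 2 * ∑ j, ‖inner 𝕜 (b c) (Y j)‖ ^ 2 :=
        sum_le_sum fun c _ => sum_norm_sq_mulVec_le A _
    _ = ‖A‖ ^ 2 * ∑ j, ‖Y j‖ ^ 2 := by
        rw [← mul_sum, sum_comm]
        simp only [b.sum_sq_norm_inner_right]

theorem sum_norm_sq_sum_smul_le (A : Matrix m n 𝕜) (Y : n → E) :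
    ∑ i, ‖∑ j, A i j • Y j‖ ^ 2 ≤ ‖A‖ ^ 2 * ∑ j, ‖Y j‖ ^ 2 := by
  let W := Submodule.span 𝕜 (Set.range Y)
  have : FiniteDimensional 𝕜 W := .span_of_finite 𝕜 (Set.finite_range Y)
  let Y' (j : n) : W := ⟨Y j, Submodule.subset_span ⟨j, rfl⟩⟩
  have h := sum_norm_sq_sum_smul_le_of_finiteDimensional A Y'
  simp only [Submodule.coe_norm, Submodule.coe_sum, Submodule.coe_smul] at h
  exact h

theorem sum_finset_norm_sq_sum_smul_le (A : Matrix m n 𝕜) (s : Finset m) (t : Finset n)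
    (Y : n → E) :
    ∑ i ∈ s, ‖∑ j ∈ t, A i j • Y j‖ ^ 2 ≤ ‖A‖ ^ 2 * ∑ j ∈ t, ‖Y j‖ ^ 2 := by
  calc ∑ i ∈ s, ‖∑ j ∈ t, A i j • Y j‖ ^ 2
      ≤ ∑ i, ‖∑ j ∈ t, A i j • Y j‖ ^ 2 :=
        sum_le_univ_sum_of_nonneg fun _ => by positivity
    _ ≤ ‖A‖ ^ 2 * ∑ j ∈ t, ‖Y j‖ ^ 2 := by
        simpa [apply_ite, ite_pow] using
          sum_norm_sq_sum_smul_le A (fun j => if j ∈ t then Y j else 0)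

theorem norm_sum_sum_mul_inner_le (A : Matrix m n 𝕜) (s : Finset m) (t : Finset n)
    (X : m → E) (Y : n → E) :
    ‖∑ i ∈ s, ∑ j ∈ t, A i j * inner 𝕜 (X i) (Y j)‖ ≤
      ‖A‖ * (√(∑ i ∈ s, ‖X i‖ ^ 2) * √(∑ j ∈ t, ‖Y j‖ ^ 2)) := by
  let Z (i : m) : E := ∑ j ∈ t, A i j • Y j
  calc ‖∑ i ∈ s, ∑ j ∈ t, A i j * inner 𝕜 (X i) (Y j)‖
      = ‖∑ i ∈ s, inner 𝕜 (X i) (Z i)‖ := by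
        simp only [Z, inner_sum, inner_smul_right]
    _ ≤ ∑ i ∈ s, ‖X i‖ * ‖Z i‖ := norm_sum_le_of_le s fun i _ => norm_inner_le_norm _ _
    _ ≤ √(∑ i ∈ s, ‖X i‖ ^ 2) * √(∑ i ∈ s, ‖Z i‖ ^ 2) :=
        Real.sum_mul_le_sqrt_mul_sqrt _ _ _
    _ ≤ √(∑ i ∈ s, ‖X i‖ ^ 2) * √(‖A‖ ^ 2 * ∑ j ∈ t, ‖Y j‖ ^ 2) := by
        gcongr
        exact sum_finset_norm_sq_sum_smul_le A s t Y
    _ = ‖A‖ * (√(∑ i ∈ s, ‖X i‖ ^ 2) * √(∑ j ∈ t, ‖Y j‖ ^ 2)) := by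
        rw [Real.sqrt_mul (sq_nonneg _), Real.sqrt_sq (norm_nonneg _)]
        ring

end MatrixInnerForm

theorem sum_sum_eq_add_of_block_diagonal_eq_zero {ι M : Type*} [Fintype ι] [DecidableEq ι]
    [AddCommMonoid M] {S : Finset ι} {f : ι → ι → M}
    (hf : ∀ i j, (i ∈ S ↔ j ∈ S) → f i j = 0) :
    ∑ i, ∑ j, f i j = ∑ i ∈ S, ∑ j ∈ Sᶜ, f i j + ∑ i ∈ Sᶜ, ∑ j ∈ S, f i j := by
  have row_mem : ∀ i ∈ S, ∑ j, f i j = ∑ j ∈ Sᶜ, f i j := fun i hi =>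
    (sum_subset (subset_univ _) fun j _ hj => hf i j (by simp_all)).symm
  have row_compl : ∀ i ∈ Sᶜ, ∑ j, f i j = ∑ j ∈ S, f i j := fun i hi =>
    (sum_subset (subset_univ _) fun j _ hj => hf i j (by simp_all)).symm
  rw [← sum_add_sum_compl S, sum_congr rfl row_mem, sum_congr rfl row_compl]

open scoped Matrix.Norms.L2Operator in
theorem norm_sum_sum_mul_inner_le_of_block_diagonal_eq_zero {𝕜 E ι : Type*} [RCLike 𝕜]
    [NormedAddCommGroup E] [InnerProductSpace 𝕜 E] [Fintype ι] [DecidableEq ι]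
    {S : Finset ι} {B : Matrix ι ι 𝕜} (hB : ∀ i j, (i ∈ S ↔ j ∈ S) → B i j = 0) (X : ι → E) :
    ‖∑ i, ∑ j, B i j * inner 𝕜 (X i) (X j)‖ ≤
      2 * ‖B‖ * (√(∑ i ∈ S, ‖X i‖ ^ 2) * √(∑ i ∈ Sᶜ, ‖X i‖ ^ 2)) := by
  rw [sum_sum_eq_add_of_block_diagonal_eq_zero (S := S) fun i j h => by rw [hB i j h, zero_mul]]
  refine (norm_add_le_of_le (norm_sum_sum_mul_inner_le B S Sᶜ X X)
    (norm_sum_sum_mul_inner_le B Sᶜ S X X)).trans_eq ?_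
  ring

theorem sqrt_mul_sqrt_sub_eq_mul_sqrt {a k : ℝ} (ha : 0 ≤ a) (hk : 0 < k) :
    √a * √(k - a) = k * √((1 / k * a) * (1 - 1 / k * a)) := by
  have h : a * (k - a) = k ^ 2 * ((1 / k * a) * (1 - 1 / k * a)) := by field_simp
  rw [← Real.sqrt_mul ha, h, Real.sqrt_mul (sq_nonneg k), Real.sqrt_sq hk.le]

theorem stmt_3_general {ι E : Type*} [Fintype ι] [DecidableEq ι] [NormedAddCommGroup E]
    [InnerProductSpace ℝ E] {k : ℝ} (hk : 0 < k) {X : ι → E} (hsum : ∑ i, ‖X i‖ ^ 2 = k)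
    {S : Finset ι} {B : Matrix ι ι ℝ} (hB : ∀ i j, (i ∈ S ↔ j ∈ S) → B i j = 0) :
    |∑ i, ∑ j, B i j * ⟪X i, X j⟫| ≤
      2 * k * ‖Matrix.toEuclideanCLM (𝕜 := ℝ) B‖ *
        √((1 / k * ∑ i ∈ S, ‖X i‖ ^ 2) * (1 - 1 / k * ∑ i ∈ S, ‖X i‖ ^ 2)) := by
  have sum_compl : ∑ i ∈ Sᶜ, ‖X i‖ ^ 2 = k - ∑ i ∈ S, ‖X i‖ ^ 2 := by
    rw [← hsum, ← sum_add_sum_compl S, add_sub_cancel_left]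
  refine (norm_sum_sum_mul_inner_le_of_block_diagonal_eq_zero hB X).trans_eq ?_
  rw [sum_compl, sqrt_mul_sqrt_sub_eq_mul_sqrt (sum_nonneg fun _ _ => sq_nonneg _) hk,
    Matrix.cstar_norm_def]
  ring

theorem stmt_3 {n m : ℕ} (hn : 1 ≤ n) (k : ℕ) (hk : 0 < k)
    (X : Fin n → EuclideanSpace ℝ (Fin m)) (I : EuclideanSpace ℝ (Fin m))
    (hsum : ∑ i, ‖X i‖ ^ 2 = (k : ℝ))
    (hrow : ∀ i, ∑ j, ⟪X i, X j⟫ ≤ (k : ℝ) * ‖X i‖ ^ 2)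
    (hnn : ∀ i j, 0 ≤ ⟪X i, X j⟫)
    (hle1 : ∀ i j, ⟪X i, X j⟫ ≤ ‖X i‖ ^ 2)
    (hle2 : ∀ i j, ⟪X i, X j⟫ ≤ ‖X j‖ ^ 2)
    (hnorm1 : ∀ i, ‖X i‖ ^ 2 ≤ 1)
    (hXI : ∀ i, ⟪X i, I⟫ = ‖X i‖ ^ 2)
    (hInorm : ‖I‖ = 1)
    (S : Finset (Fin n)) (hS : S.card = k)
    (B : Matrix (Fin n) (Fin n) ℝ) (hBsymm : B.IsSymm)
    (hBzero : ∀ i j, ((i ∈ S ∧ j ∈ S) ∨ (i ∉ S ∧ j ∉ S)) → B i j = 0) :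
    ∑ i, ∑ j, B i j * ⟪X i, X j⟫ ≤
      2 * (k : ℝ) * ‖Matrix.toEuclideanCLM (𝕜 := ℝ) B‖ *
        Real.sqrt (((1 / (k : ℝ)) * ∑ i ∈ S, ‖X i‖ ^ 2) *
          (1 - (1 / (k : ℝ)) * ∑ i ∈ S, ‖X i‖ ^ 2)) := by
  exact (le_abs_self _).trans <| stmt_3_general (mod_cast hk) hsum fun i j h =>
    hBzero i j (iff_iff_and_or_not_and_not.mp h)
end

section
/- Let {X_i}_{i∈V} together with I be a feasible SDP solution for the Densest k-Subgraph relaxation, where k is a positive integer, and let S ⊆ V with |S| = k and k < n. Let d, δ, ξ, λ, d' > 0 be reals and set p := δd/k. Suppose that: (a) Σ_{i∈V} Σ_{j∈V} A_{ij} ⟨X_i, X_j⟩ ≥ kd; (b) Σ_{i∈S} Σ_{j∈V∖S} A_{ij} ⟨X_i, X_j⟩ ≤ 3pk² + (ξ/2)·k·√(np); and (c) Σ_{i∈V∖S} Σ_{j∈V∖S} A_{ij} ⟨X_i, X_j⟩ ≤ λk + d'k²/(n − k). Then Σ_{i∈S} Σ_{j∈S} A_{ij} ⟨X_i, X_j⟩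 ≥ (1 − η)·kd, where η := 6δ + ξ√(δn/(dk)) + λ/d + d'k/((n − k)d). -/
open RealInnerProductSpace Finset

/-!
The two mixed blocks `S × Sᶜ` and `Sᶜ × S` carry the same mass by symmetry, so the mass outside
`S × S` is at most twice the bound in (b) plus the bound in (c). For `p = δd/k` this is exactly
`η · kd`.
-/

section BlockSums

variable {ι κ M : Type*} [AddCommMonoid M]

theorem sum_sum_eq_sum_blocks [Fintype ι] [DecidableEq ι] [Fintype κ] [DecidableEq κ]
    (f : ι → κ → M) (S : Finset ι) (T : Finset κ) :
    ∑ i, ∑ j, f i j =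
      (∑ i ∈ S, ∑ j ∈ T, f i j + ∑ i ∈ S, ∑ j ∈ Tᶜ, f i j) +
        (∑ i ∈ Sᶜ, ∑ j ∈ T, f i j + ∑ i ∈ Sᶜ, ∑ j ∈ Tᶜ, f i j) := by
  simp only [← sum_add_distrib, sum_add_sum_compl]

theorem sum_sum_comm_of_symm {f : ι → ι → M} (hf : ∀ i j, f i j = f j i) (S T : Finset ι) :
    ∑ i ∈ S, ∑ j ∈ T, f i j = ∑ i ∈ T, ∑ j ∈ S, f i j :=
  sum_comm.trans <| sum_congr rfl fun i _ ↦ sum_congr rfl fun j _ ↦ hf j i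

theorem sum_sum_eq_of_symm [Fintype ι] [DecidableEq ι] {f : ι → ι → M}
    (hf : ∀ i j, f i j = f j i) (S : Finset ι) :
    ∑ i, ∑ j, f i j =
      ∑ i ∈ S, ∑ j ∈ S, f i j + 2 • ∑ i ∈ S, ∑ j ∈ Sᶜ, f i j +
        ∑ i ∈ Sᶜ, ∑ j ∈ Sᶜ, f i j := by
  rw [sum_sum_eq_sum_blocks f S S, sum_sum_comm_of_symm hf Sᶜ S]
  abel

end BlockSums

theorem sqrt_mul_edgeProb_eq (n k δ : ℝ) {d : ℝ} (hd : 0 < d) :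
    √(n * (δ * d / k)) = d * √(δ * n / (d * k)) := by
  have hfactor : n * (δ * d / k) = d ^ 2 * (δ * n / (d * k)) := by field_simp
  rw [hfactor, Real.sqrt_mul (sq_nonneg d), Real.sqrt_sq hd.le]

theorem block_bounds_eq_loss_mul (n δ ξ lam d' k : ℝ) {d : ℝ} (hd : 0 < d) :
    2 * (3 * (δ * d / k) * k ^ 2 + ξ / 2 * k * √(n * (δ * d / k))) +
        (lam * k + d' * k ^ 2 / (n - k)) =
      (6 * δ + ξ * √(δ * n / (d * k)) + lam / d + d' * k / ((n - k) * d)) * (k * d) := by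
  rw [sqrt_mul_edgeProb_eq n k δ hd]
  field_simp
  ring

theorem stmt_7_general {V : Type*} [Fintype V] [DecidableEq V] {w : V → V → ℝ}
    (hw : ∀ i j, w i j = w j i) (S : Finset V) {k d δ ξ lam d' p : ℝ} (hk : 0 < k)
    (hkn : k ≠ Fintype.card V) (hd : 0 < d) (hδ : 0 ≤ δ) (hp : p = δ * d / k)
    (htotal : k * d ≤ ∑ i, ∑ j, w i j)
    (hmixed : ∑ i ∈ S, ∑ j ∈ Sᶜ, w i j ≤
      3 * p * k ^ 2 + ξ / 2 * k * √(Fintype.card V * p))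
    (houter : ∑ i ∈ Sᶜ, ∑ j ∈ Sᶜ, w i j ≤
      lam * k + d' * k ^ 2 / (Fintype.card V - k)) :
    (1 - (6 * δ + ξ * √(δ * Fintype.card V / (d * k)) + lam / d +
        d' * k / ((Fintype.card V - k) * d))) * (k * d) ≤
      ∑ i ∈ S, ∑ j ∈ S, w i j := by
  subst hp
  rw [sum_sum_eq_of_symm hw S, nsmul_eq_mul, Nat.cast_ofNat] at htotal
  rw [sub_mul, one_mul, ← block_bounds_eq_loss_mul _ δ ξ lam d' k hd]
  linarith

theorem stmt_7 {n m : ℕ} (hn : 1 ≤ n) (k : ℕ) (hk : 0 < k) (hkn : k < n)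
    (A : Matrix (Fin n) (Fin n) ℝ) (hAsymm : A.IsSymm) (hAnn : ∀ i j, 0 ≤ A i j)
    (X : Fin n → EuclideanSpace ℝ (Fin m)) (I : EuclideanSpace ℝ (Fin m))
    (hsum : ∑ i, ‖X i‖ ^ 2 = (k : ℝ))
    (hrow : ∀ i, ∑ j, ⟪X i, X j⟫ ≤ (k : ℝ) * ‖X i‖ ^ 2)
    (hnn : ∀ i j, 0 ≤ ⟪X i, X j⟫)
    (hle1 : ∀ i j, ⟪X i, X j⟫ ≤ ‖X i‖ ^ 2)
    (hle2 : ∀ i j, ⟪X i, X j⟫ ≤ ‖X j‖ ^ 2)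
    (hnorm1 : ∀ i, ‖X i‖ ^ 2 ≤ 1)
    (hXI : ∀ i, ⟪X i, I⟫ = ‖X i‖ ^ 2)
    (hInorm : ‖I‖ = 1)
    (S : Finset (Fin n)) (hS : S.card = k)
    (d δ ξ lam d' : ℝ) (hd : 0 < d) (hδ : 0 < δ) (hξ : 0 < ξ) (hlam : 0 < lam) (hd' : 0 < d')
    (p : ℝ) (hp : p = δ * d / k)
    (ha : (k : ℝ) * d ≤ ∑ i, ∑ j, A i j * ⟪X i, X j⟫)
    (hb : ∑ i ∈ S, ∑ j ∈ Sᶜ, A i j * ⟪X i, X j⟫ ≤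
      3 * p * (k : ℝ) ^ 2 + (ξ / 2) * (k : ℝ) * Real.sqrt ((n : ℝ) * p))
    (hc : ∑ i ∈ Sᶜ, ∑ j ∈ Sᶜ, A i j * ⟪X i, X j⟫ ≤
      lam * (k : ℝ) + d' * (k : ℝ) ^ 2 / ((n : ℝ) - (k : ℝ))) :
    (1 - (6 * δ + ξ * Real.sqrt (δ * (n : ℝ) / (d * (k : ℝ))) + lam / d +
        d' * (k : ℝ) / (((n : ℝ) - (k : ℝ)) * d))) * ((k : ℝ) * d) ≤
      ∑ i ∈ S, ∑ j ∈ S, A i j * ⟪X i, X j⟫ := by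
  simpa using stmt_7_general (fun i j ↦ by rw [hAsymm.apply, real_inner_comm]) S
    (Nat.cast_pos.mpr hk) (by simpa using hkn.ne) hd hδ.le hp ha (by simpa using hb)
    (by simpa using hc)
end

section
/- Let {X_i}_{i∈V} together with I be a feasible SDP solution for the Densest k-Subgraph relaxation, where k is a positive integer, and let S ⊆ V with |S| = k. Let d > 0, η > 0 and α > 1 be reals with Σ_{i∈S} Σ_{j∈S} A_{ij} = kd and Σ_{i∈S} Σ_{j∈S} A_{ij} ⟨X_i, X_j⟩ ≥ (1 − η)·kd. Define T := {i ∈ V : ‖X_i‖² ≥ 1 − αη}. Then ρ(T) ≥ ρ(T ∩ S) ≥ (kd/2)·(1 − 1/α). -/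
open RealInnerProductSpace Finset

/-!
The argument is Markov's inequality on ordered pairs. Draw a pair `(i, j)` from `S × S` with
probability proportional to `A i j`. The defect `1 - ⟪X i, X j⟫` is nonnegative and has mean at
most `η`, so it is at least `α * η` with probability at most `1 / α`. If `i` or `j` lies outside
`T`, then `⟪X i, X j⟫ ≤ min (‖X i‖ ^ 2) (‖X j‖ ^ 2)` forces the defect to be that large; hence at
least a `1 - 1 / α` fraction of the weight inside `S` lies inside `T ∩ S`.
-/

theorem mul_sum_le_sum_mul_of_subset {ι R : Type*} [CommSemiring R] [PartialOrder R]
    [IsOrderedRing R] {s u : Finset ι} {w f : ι → R} {t : R} (hus : u ⊆ s)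
    (hw : ∀ i ∈ s, 0 ≤ w i) (hf : ∀ i ∈ s, 0 ≤ f i) (ht : ∀ i ∈ u, t ≤ f i) :
    t * ∑ i ∈ u, w i ≤ ∑ i ∈ s, w i * f i :=
  calc t * ∑ i ∈ u, w i = ∑ i ∈ u, w i * t := by rw [mul_comm, sum_mul]
    _ ≤ ∑ i ∈ u, w i * f i :=
      sum_le_sum fun i hi ↦ mul_le_mul_of_nonneg_left (ht i hi) (hw i (hus hi))
    _ ≤ ∑ i ∈ s, w i * f i :=
      sum_le_sum_of_subset_of_nonneg hus fun i hi _ ↦ mul_nonneg (hw i hi) (hf i hi)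

theorem sum_mul_one_sub_one_div_le_sum_of_subset {ι R : Type*} [Field R] [LinearOrder R]
    [IsStrictOrderedRing R] {s u : Finset ι} {w f : ι → R} {η α : R} (hus : u ⊆ s)
    (hw : ∀ i ∈ s, 0 ≤ w i) (hf : ∀ i ∈ s, f i ≤ 1) (hη : 0 < η) (hα : 0 < α)
    (hfu : ∀ i ∈ s, i ∉ u → f i ≤ 1 - α * η)
    (hmean : (1 - η) * ∑ i ∈ s, w i ≤ ∑ i ∈ s, w i * f i) :
    (∑ i ∈ s, w i) * (1 - 1 / α) ≤ ∑ i ∈ u, w i := by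
  classical
  have markov : α * η * ∑ i ∈ s \ u, w i ≤ ∑ i ∈ s, w i * (1 - f i) := by
    refine mul_sum_le_sum_mul_of_subset sdiff_subset hw (fun i hi ↦ sub_nonneg.2 (hf i hi)) ?_
    intro i hi
    rw [mem_sdiff] at hi
    linarith [hfu i hi.1 hi.2]
  have mean_defect : ∑ i ∈ s, w i * (1 - f i) ≤ η * ∑ i ∈ s, w i := by
    simp only [mul_sub, mul_one, sum_sub_distrib]
    linarith
  have outside : ∑ i ∈ s \ u, w i ≤ (∑ i ∈ s, w i) / α := by
    rw [le_div_iff₀ hα]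
    refine le_of_mul_le_mul_left ?_ hη
    linarith
  rw [mul_one_sub, mul_one_div]
  linarith [sum_sdiff (f := w) hus]

section EdgeWeight

variable {V R : Type*} [Field R]

/-- The weight `ρ(U)` of the edges inside `U`, for a graph with weighted adjacency matrix `A`; the
sum runs over ordered pairs and so counts every edge twice, whence the factor `1 / 2`. -/
def edgeWeight (A : Matrix V V R) (U : Finset V) : R :=
  (1 / 2) * ∑ i ∈ U, ∑ j ∈ U, A i j

theorem edgeWeight_eq_sum_product (A : Matrix V V R) (U : Finset V) :
    edgeWeight A U = (1 / 2) * ∑ p ∈ U ×ˢ U, A p.1 p.2 := by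
  rw [edgeWeight, sum_product]

variable [LinearOrder R] [IsStrictOrderedRing R]

theorem edgeWeight_mono {A : Matrix V V R} (hA : ∀ i j, 0 ≤ A i j) : Monotone (edgeWeight A) := by
  intro U W hUW
  simp only [edgeWeight_eq_sum_product]
  refine mul_le_mul_of_nonneg_left ?_ one_half_pos.le
  exact sum_le_sum_of_subset_of_nonneg (product_subset_product hUW hUW) fun p _ _ ↦ hA p.1 p.2

/-- The numbers `x i` and `Y i j` are the vertex and pair variables of a linear programming
relaxation; a vector solution has `x i = ‖X i‖ ^ 2` and `Y i j = ⟪X i, X j⟫`. -/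
theorem stmt_9_general [DecidableEq V] {A Y : Matrix V V R} {x : V → R} {S T : Finset V} {η α : R}
    (hA : ∀ i j, 0 ≤ A i j) (hYrow : ∀ i j, Y i j ≤ x i) (hYcol : ∀ i j, Y i j ≤ x j)
    (hx : ∀ i, x i ≤ 1) (hη : 0 < η) (hα : 0 < α)
    (hvalue : (1 - η) * ∑ i ∈ S, ∑ j ∈ S, A i j ≤ ∑ i ∈ S, ∑ j ∈ S, A i j * Y i j)
    (hT : ∀ i ∈ S, 1 - α * η ≤ x i → i ∈ T) :
    edgeWeight A S * (1 - 1 / α) ≤ edgeWeight A (T ∩ S) ∧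
      edgeWeight A (T ∩ S) ≤ edgeWeight A T := by
  refine ⟨?_, edgeWeight_mono hA inter_subset_left⟩
  have hY_outside : ∀ p ∈ S ×ˢ S, p ∉ (T ∩ S) ×ˢ (T ∩ S) → Y p.1 p.2 ≤ 1 - α * η := by
    rintro ⟨i, j⟩ hp hp'
    obtain ⟨hi, hj⟩ := mem_product.1 hp
    by_contra! hlt
    exact hp' (mk_mem_product
      (mem_inter.2 ⟨hT i hi (hlt.le.trans (hYrow i j)), hi⟩)
      (mem_inter.2 ⟨hT j hj (hlt.le.trans (hYcol i j)), hj⟩))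
  have concentration := sum_mul_one_sub_one_div_le_sum_of_subset
    (product_subset_product inter_subset_right inter_subset_right) (fun p _ ↦ hA p.1 p.2)
    (fun p _ ↦ (hYrow p.1 p.2).trans (hx p.1)) hη hα hY_outside
    (by simpa only [sum_product] using hvalue)
  simp only [edgeWeight_eq_sum_product]
  linarith

end EdgeWeight

theorem stmt_9 {n m : ℕ} (hn : 1 ≤ n) (k : ℕ) (hk : 0 < k)
    (A : Matrix (Fin n) (Fin n) ℝ) (hAsymm : A.IsSymm) (hAnn : ∀ i j, 0 ≤ A i j)
    (X : Fin n → EuclideanSpace ℝ (Fin m)) (I : EuclideanSpace ℝ (Fin m))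
    (hsum : ∑ i, ‖X i‖ ^ 2 = (k : ℝ))
    (hrow : ∀ i, ∑ j, ⟪X i, X j⟫ ≤ (k : ℝ) * ‖X i‖ ^ 2)
    (hnn : ∀ i j, 0 ≤ ⟪X i, X j⟫)
    (hle1 : ∀ i j, ⟪X i, X j⟫ ≤ ‖X i‖ ^ 2)
    (hle2 : ∀ i j, ⟪X i, X j⟫ ≤ ‖X j‖ ^ 2)
    (hnorm1 : ∀ i, ‖X i‖ ^ 2 ≤ 1)
    (hXI : ∀ i, ⟪X i, I⟫ = ‖X i‖ ^ 2)
    (hInorm : ‖I‖ = 1)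
    (S : Finset (Fin n)) (hS : S.card = k)
    (d η α : ℝ) (hd : 0 < d) (hη : 0 < η) (hα : 1 < α)
    (hreg : ∑ i ∈ S, ∑ j ∈ S, A i j = (k : ℝ) * d)
    (hsdp : (1 - η) * ((k : ℝ) * d) ≤ ∑ i ∈ S, ∑ j ∈ S, A i j * ⟪X i, X j⟫)
    (T : Finset (Fin n)) (hT : T = Finset.univ.filter (fun i => 1 - α * η ≤ ‖X i‖ ^ 2)) :
    ((k : ℝ) * d / 2) * (1 - 1 / α) ≤ (1 / 2) * ∑ i ∈ T ∩ S, ∑ j ∈ T ∩ S, A i j ∧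
      (1 / 2) * ∑ i ∈ T ∩ S, ∑ j ∈ T ∩ S, A i j ≤ (1 / 2) * ∑ i ∈ T, ∑ j ∈ T, A i j := by
  have hρS : edgeWeight A S = (k : ℝ) * d / 2 := by rw [edgeWeight, hreg]; ring
  exact hρS ▸ stmt_9_general (Y := fun i j ↦ ⟪X i, X j⟫) hAnn hle1 hle2 hnorm1 hη
    (zero_lt_one.trans hα) (hreg.symm ▸ hsdp) fun i _ hi ↦ hT ▸ mem_filter.2 ⟨mem_univ i, hi⟩
end

section
/- Let V'' be a finite set with |V''| ≥ 2, let w be a symmetric nonnegative weight function on pairs of elements of V'' with w(i,i) = 0 for all i, and define ρ(W) := (1/2) Σ_{i,j∈W} w(i,j) for W ⊆ V''. Then for every integer m with 1 ≤ m ≤ |V''| there exists a subset V' ⊆ V'' with |V'| = m such that ρ(V') ≥ (m(m − 1))/(|V''|(|V''| − 1)) · ρ(V''). -/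
open RealInnerProductSpace Finset

/-!
A uniformly random `m`-element subset of an `n`-element set contains a given `k`-element subset with
probability `m.choose k / n.choose k`. By linearity, this is the fraction of the total weight of a
weighted `k`-uniform hypergraph which it spans on average, so some `m`-element subset spans at least
that much. Weighted graphs are the case `k = 2`, with each ordered pair `(i, j)`, `i ≠ j`, as an
edge on `{i, j}`.
-/

section WeightedHypergraph

variable {ι α M : Type*} [DecidableEq ι]

theorem choose_mul_card_filter_powersetCard_subset {T V : Finset ι} (hTV : T ⊆ V) (m : ℕ) :
    (#V).choose #T * #{U ∈ V.powersetCard m | T ⊆ U} = (#V).choose m * m.choose #T := by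
  obtain hTm | hmT := le_or_gt #T m
  · rw [card_filter_powersetCard_subset T V m hTV hTm, Nat.choose_mul hTm]
  · have hempty : {U ∈ V.powersetCard m | T ⊆ U} = ∅ :=
      filter_eq_empty_iff.2 fun U hU hTU ↦
        hmT.not_ge ((card_le_card hTU).trans_eq (mem_powersetCard.1 hU).2)
    rw [hempty, card_empty, Nat.choose_eq_zero_of_lt hmT, mul_zero, mul_zero]

theorem choose_nsmul_sum_powersetCard_sum_filter_subset [AddCommMonoid M] {V : Finset ι} {k : ℕ}
    {E : Finset α} {vertices : α → Finset ι} (hE : ∀ e ∈ E, vertices e ∈ V.powersetCard k)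
    (f : α → M) (m : ℕ) :
    (#V).choose k • ∑ U ∈ V.powersetCard m, ∑ e ∈ E with vertices e ⊆ U, f e =
      ((#V).choose m * m.choose k) • ∑ e ∈ E, f e := by
  have double_count : ∑ U ∈ V.powersetCard m, ∑ e ∈ E with vertices e ⊆ U, f e =
      ∑ e ∈ E, #{U ∈ V.powersetCard m | vertices e ⊆ U} • f e := by
    simp only [← sum_const]
    exact sum_comm' fun U e ↦ by simp only [mem_filter]; tauto
  rw [double_count, smul_sum, smul_sum]
  refine sum_congr rfl fun e he ↦ ?_
  obtain ⟨hsub, rfl⟩ := mem_powersetCard.1 (hE e he)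
  rw [smul_smul, choose_mul_card_filter_powersetCard_subset hsub]

theorem exists_subset_card_eq_choose_nsmul_sum_le [AddCommMonoid M] [LinearOrder M]
    [IsOrderedCancelAddMonoid M] {V : Finset ι} {k : ℕ} {E : Finset α} {vertices : α → Finset ι}
    (hE : ∀ e ∈ E, vertices e ∈ V.powersetCard k) (f : α → M) {m : ℕ} (hm : m ≤ #V) :
    ∃ U ⊆ V, #U = m ∧
      m.choose k • ∑ e ∈ E, f e ≤ (#V).choose k • ∑ e ∈ E with vertices e ⊆ U, f e := by
  have sum_eq : ∑ _U ∈ V.powersetCard m, m.choose k • ∑ e ∈ E, f e =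
      ∑ U ∈ V.powersetCard m, (#V).choose k • ∑ e ∈ E with vertices e ⊆ U, f e := by
    rw [sum_const, card_powersetCard, smul_smul, ← smul_sum,
      choose_nsmul_sum_powersetCard_sum_filter_subset hE]
  obtain ⟨U, hU, hle⟩ := exists_le_of_sum_le (powersetCard_nonempty.2 hm) sum_eq.le
  obtain ⟨hUV, hcard⟩ := mem_powersetCard.1 hU
  exact ⟨U, hUV, hcard, hle⟩

end WeightedHypergraph

section OffDiag

variable {ι : Type*}

theorem pair_mem_powersetCard_two_of_mem_offDiag [DecidableEq ι] {V : Finset ι} {p : ι × ι}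
    (hp : p ∈ V.offDiag) :
    {p.1, p.2} ∈ V.powersetCard 2 := by
  obtain ⟨h₁, h₂, hne⟩ := mem_offDiag.1 hp
  exact mem_powersetCard.2 ⟨insert_subset h₁ (singleton_subset_iff.2 h₂), card_pair hne⟩

theorem filter_offDiag_pair_subset [DecidableEq ι] {U V : Finset ι} (hUV : U ⊆ V) :
    {p ∈ V.offDiag | {p.1, p.2} ⊆ U} = U.offDiag := by
  ext p
  simp only [mem_filter, mem_offDiag, insert_subset_iff, singleton_subset_iff]
  exact ⟨fun ⟨⟨_, _, hne⟩, h₁, h₂⟩ ↦ ⟨h₁, h₂, hne⟩,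
    fun ⟨h₁, h₂, hne⟩ ↦ ⟨⟨hUV h₁, hUV h₂, hne⟩, h₁, h₂⟩⟩

theorem sum_sum_eq_sum_offDiag {M : Type*} [AddCommMonoid M] {V : Finset ι} {w : ι → ι → M}
    (hdiag : ∀ i ∈ V, w i i = 0) :
    ∑ i ∈ V, ∑ j ∈ V, w i j = ∑ p ∈ V.offDiag, w p.1 p.2 := by
  classical
  rw [← sum_product', ← diag_union_offDiag, sum_union (disjoint_diag_offDiag V), sum_diag,
    sum_eq_zero hdiag, zero_add]

end OffDiag

theorem stmt_11_general {ι K : Type*} [Field K] [LinearOrder K] [IsStrictOrderedRing K]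
    {V : Finset ι} (hcard : 2 ≤ #V) (w : ι → ι → K) {m : ℕ} (hm : m ≤ #V) :
    ∃ U ⊆ V, #U = m ∧
      ((m : K) * ((m : K) - 1)) / ((#V : K) * ((#V : K) - 1)) * ∑ p ∈ V.offDiag, w p.1 p.2 ≤
        ∑ p ∈ U.offDiag, w p.1 p.2 := by
  classical
  obtain ⟨U, hUV, hU, hle⟩ := exists_subset_card_eq_choose_nsmul_sum_le
    (fun _ ↦ pair_mem_powersetCard_two_of_mem_offDiag) (fun p : ι × ι ↦ w p.1 p.2) hm
  refine ⟨U, hUV, hU, ?_⟩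
  have choose_pos : (0 : K) < (#V).choose 2 := mod_cast Nat.choose_pos hcard
  have ratio_eq : ((m : K) * (m - 1)) / (#V * (#V - 1)) = m.choose 2 / (#V).choose 2 := by
    rw [Nat.cast_choose_two, Nat.cast_choose_two, div_div_div_cancel_right₀ two_ne_zero]
  rw [filter_offDiag_pair_subset hUV, nsmul_eq_mul, nsmul_eq_mul] at hle
  rwa [ratio_eq, div_mul_eq_mul_div, div_le_iff₀' choose_pos]

theorem stmt_11 {ι : Type*} [DecidableEq ι] (V'' : Finset ι)
    (w : ι → ι → ℝ)
    (hsymm : ∀ i j, w i j = w j i)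
    (hnn : ∀ i j, 0 ≤ w i j)
    (hdiag : ∀ i, w i i = 0)
    (hcard : 2 ≤ V''.card)
    (μ : ℕ) (hm1 : 1 ≤ μ) (hm2 : μ ≤ V''.card) :
    ∃ V' ⊆ V'', V'.card = μ ∧
      ((μ : ℝ) * ((μ : ℝ) - 1)) / ((V''.card : ℝ) * ((V''.card : ℝ) - 1)) *
        ((1 / 2) * ∑ i ∈ V'', ∑ j ∈ V'', w i j) ≤
          (1 / 2) * ∑ i ∈ V', ∑ j ∈ V', w i j := by
  simp only [sum_sum_eq_sum_offDiag fun i _ ↦ hdiag i, mul_left_comm _ (1 / 2 : ℝ)]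
  simpa using stmt_11_general hcard w hm2
end

section
/- Let n, k, d, δ, ξ, λ, d' > 0 be reals with k < n, set p := δd/k, and suppose c := 1 − λ/d − d'k/((n − k)d) − 6δ > 0. Let μ ∈ [0, 1) be a real satisfying kd ≤ kd·μ + 6pk²(1 − μ) + 2ξk√(np)·√(μ(1 − μ)) + (λk + d'k²/(n − k))·(1 − μ). Then μ ≥ 1 − η', where η' := 1/(1 + (dk/(4ξ²δn))·c²). -/
open RealInnerProductSpace Finset

/-!
Everything in the hypothesis except the square-root term is a multiple of `1 - μ`; collecting these
terms and dividing by `k` leaves `d c (1 - μ) ≤ 2 ξ √(np) √(μ (1 - μ))`. Squaring and cancelling one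
factor `1 - μ` gives `t (1 - μ) ≤ μ` for `t = (d c)² / (4 ξ² n p)`, which is the claim because
`n p = δ d n / k`.
-/

theorem one_sub_one_div_one_add_le_iff {K : Type*} [Field K] [LinearOrder K]
    [IsStrictOrderedRing K] {t μ : K} (ht : 0 < 1 + t) :
    1 - 1 / (1 + t) ≤ μ ↔ t * (1 - μ) ≤ μ := by
  rw [sub_le_comm, le_div_iff₀ ht]
  constructor <;> intro h <;> linarith

theorem sq_mul_one_sub_le_of_mul_one_sub_le_mul_sqrt {a b μ : ℝ} (ha : 0 ≤ a) (hμ : 0 ≤ μ)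
    (h : a * (1 - μ) ≤ b * √(μ * (1 - μ))) : a ^ 2 * (1 - μ) ≤ b ^ 2 * μ := by
  rcases le_or_gt 1 μ with hμ1 | hμ1
  · calc
      a ^ 2 * (1 - μ) ≤ 0 := mul_nonpos_of_nonneg_of_nonpos (sq_nonneg a) (sub_nonpos.2 hμ1)
      _ ≤ b ^ 2 * μ := by positivity
  · have hν : 0 < 1 - μ := sub_pos.2 hμ1
    refine le_of_mul_le_mul_right ?_ hν
    calc
      a ^ 2 * (1 - μ) * (1 - μ) = (a * (1 - μ)) ^ 2 := by ring
      _ ≤ (b * √(μ * (1 - μ))) ^ 2 := pow_le_pow_left₀ (by positivity) h 2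
      _ = b ^ 2 * μ * (1 - μ) := by rw [mul_pow, Real.sq_sqrt (by positivity), mul_assoc]

theorem one_sub_one_div_one_add_sq_div_sq_le {a b μ : ℝ} (ha : 0 ≤ a) (hb : b ≠ 0) (hμ : 0 ≤ μ)
    (h : a * (1 - μ) ≤ b * √(μ * (1 - μ))) : 1 - 1 / (1 + a ^ 2 / b ^ 2) ≤ μ := by
  rw [one_sub_one_div_one_add_le_iff (by positivity), div_mul_eq_mul_div,
    div_le_iff₀ (by positivity), mul_comm μ]
  exact sq_mul_one_sub_le_of_mul_one_sub_le_mul_sqrt ha hμ h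

theorem stmt_13_general (n k d δ ξ lam d' : ℝ)
    (hn : 0 < n) (hk : 0 < k) (hd : 0 < d) (hδ : 0 < δ) (hξ : ξ ≠ 0) (hkn : n ≠ k)
    (p : ℝ) (hp : p = δ * d / k)
    (c : ℝ) (hc : c = 1 - lam / d - d' * k / ((n - k) * d) - 6 * δ) (hc0 : 0 ≤ c)
    (μ : ℝ) (hμ : 0 ≤ μ)
    (hineq : k * d ≤ k * d * μ + 6 * p * k ^ 2 * (1 - μ)
      + 2 * ξ * k * √(n * p) * √(μ * (1 - μ))
      + (lam * k + d' * k ^ 2 / (n - k)) * (1 - μ)) :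
    1 - 1 / (1 + d * k / (4 * ξ ^ 2 * δ * n) * c ^ 2) ≤ μ := by
  have hnp : 0 < n * p := by rw [hp]; positivity
  have coeff : 6 * p * k ^ 2 + (lam * k + d' * k ^ 2 / (n - k)) = k * d * (1 - c) := by
    have hnk : n - k ≠ 0 := sub_ne_zero.2 hkn
    rw [hp, hc]
    field_simp
    ring
  have linear_bound : d * c * (1 - μ) ≤ 2 * ξ * √(n * p) * √(μ * (1 - μ)) := by
    refine le_of_mul_le_mul_left ?_ hk
    linear_combination hineq + (1 - μ) * coeff
  have ratio : d * k / (4 * ξ ^ 2 * δ * n) * c ^ 2 = (d * c) ^ 2 / (2 * ξ * √(n * p)) ^ 2 := by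
    rw [mul_pow _ √(n * p), Real.sq_sqrt hnp.le, hp]
    field_simp
    ring
  rw [ratio]
  exact one_sub_one_div_one_add_sq_div_sq_le (by positivity) (by positivity) hμ linear_bound

theorem stmt_13 (n k d δ ξ lam d' : ℝ)
    (hn : 0 < n) (hk : 0 < k) (hd : 0 < d) (hδ : 0 < δ) (hξ : 0 < ξ)
    (hlam : 0 < lam) (hd' : 0 < d') (hkn : k < n)
    (p : ℝ) (hp : p = δ * d / k)
    (c : ℝ) (hc : c = 1 - lam / d - d' * k / ((n - k) * d) - 6 * δ) (hcpos : 0 < c)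
    (μ : ℝ) (hμ0 : 0 ≤ μ) (hμ1 : μ < 1)
    (hineq : k * d ≤ k * d * μ + 6 * p * k ^ 2 * (1 - μ)
      + 2 * ξ * k * Real.sqrt (n * p) * Real.sqrt (μ * (1 - μ))
      + (lam * k + d' * k ^ 2 / (n - k)) * (1 - μ)) :
    1 - 1 / (1 + d * k / (4 * ξ ^ 2 * δ * n) * c ^ 2) ≤ μ :=
  stmt_13_general n k d δ ξ lam d' hn hk hd hδ hξ.ne' hkn.ne' p hp c hc hcpos.le μ hμ0 hineq
end

section
/- Let {X_i}_{i∈V} together with I be a feasible SDP solution for the Densest k-Subgraph relaxation, where k is a positive integer, let S ⊆ V with |S| = k, and let d > 0, η' > 0 and α > 1 be reals. Suppose the restriction of A to S is d-regular (Σ_{j∈S} A_{ij} = d for every i ∈ S) and (1/k) Σ_{i∈S} ‖X_i‖² ≥ 1 − η'. Define T := {i ∈ V : ‖X_i‖² ≥ 1 − αη'}. Then ρ(T ∩ S) ≥ (kd/2)·(1 − 2/α). -/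
open RealInnerProductSpace Finset

/-!
By Markov's inequality for the deficits `1 - ‖X i‖ ^ 2`, at most `k / α` vertices of `S` lie
outside `T`. Deleting a vertex of `S` deletes a row and a column of the adjacency matrix, each of
weight `d`, so `T ∩ S` retains at least `k * d - 2 * (k / α) * d` of the total weight `k * d`.
-/

section Markov

variable {ι R : Type*}

theorem card_filter_le_nsmul_le_sum [AddCommMonoid R] [LinearOrder R] [IsOrderedAddMonoid R]
    {s : Finset ι} {f : ι → R} (hf : ∀ i ∈ s, 0 ≤ f i) (a : R) :
    #{i ∈ s | a ≤ f i} • a ≤ ∑ i ∈ s, f i :=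
  calc
    #{i ∈ s | a ≤ f i} • a ≤ ∑ i ∈ s with a ≤ f i, f i :=
      card_nsmul_le_sum _ _ _ fun _ hi ↦ (mem_filter.1 hi).2
    _ ≤ ∑ i ∈ s, f i :=
      sum_le_sum_of_subset_of_nonneg (filter_subset _ _) fun i hi _ ↦ hf i hi

theorem card_filter_le_one_sub_mul_le_div [Field R] [LinearOrder R] [IsStrictOrderedRing R]
    {s : Finset ι} {w : ι → R} {η α : R} (hη : 0 < η) (hα : 0 < α) (hw : ∀ i ∈ s, w i ≤ 1)
    (hsum : (#s : R) * (1 - η) ≤ ∑ i ∈ s, w i) :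
    (#{i ∈ s | w i ≤ 1 - α * η} : R) ≤ #s / α := by
  have hdeficit : ∑ i ∈ s, (1 - w i) ≤ #s * η := by
    rw [sum_sub_distrib, sum_const, nsmul_one]
    linarith
  have hmarkov := card_filter_le_nsmul_le_sum (fun i hi ↦ sub_nonneg.2 (hw i hi)) (α * η)
  simp only [le_sub_comm (a := α * η), nsmul_eq_mul, ← mul_assoc] at hmarkov
  exact (le_div_iff₀ hα).2 (le_of_mul_le_mul_right (hmarkov.trans hdeficit) hη)

end Markov

section Regular

variable {ι R : Type*} [DecidableEq ι] {s t : Finset ι}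

theorem sum_sdiff_sum_sdiff [AddCommGroup R] (hts : t ⊆ s) (f : ι → ι → R) :
    ∑ i ∈ s \ t, ∑ j ∈ s \ t, f i j =
      ∑ i ∈ s, ∑ j ∈ s, f i j - ∑ i ∈ t, ∑ j ∈ s, f i j - ∑ i ∈ s, ∑ j ∈ t, f i j +
        ∑ i ∈ t, ∑ j ∈ t, f i j := by
  simp only [sum_sdiff_eq_sub hts, sum_sub_distrib]
  abel

theorem card_sub_two_mul_card_mul_le_sum_sdiff [Ring R] [PartialOrder R] [IsOrderedAddMonoid R]
    {A : ι → ι → R} {d : R} (hts : t ⊆ s) (hA : ∀ i ∈ t, ∀ j ∈ t, 0 ≤ A i j)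
    (hrow : ∀ i ∈ s, ∑ j ∈ s, A i j = d) (hcol : ∀ j ∈ t, ∑ i ∈ s, A i j = d) :
    ((#s : R) - 2 * #t) * d ≤ ∑ i ∈ s \ t, ∑ j ∈ s \ t, A i j := by
  have htotal : ∑ i ∈ s, ∑ j ∈ s, A i j = #s * d := by
    rw [sum_congr rfl hrow, sum_const, nsmul_eq_mul]
  have hrows : ∑ i ∈ t, ∑ j ∈ s, A i j = #t * d := by
    rw [sum_congr rfl fun i hi ↦ hrow i (hts hi), sum_const, nsmul_eq_mul]
  have hcols : ∑ i ∈ s, ∑ j ∈ t, A i j = #t * d := by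
    rw [sum_comm, sum_congr rfl hcol, sum_const, nsmul_eq_mul]
  rw [sum_sdiff_sum_sdiff hts, htotal, hrows, hcols, sub_mul, two_mul, add_mul, ← sub_sub]
  exact le_add_of_nonneg_right (sum_nonneg fun i hi ↦ sum_nonneg (hA i hi))

end Regular

theorem stmt_16_general {ι K : Type*} [Field K] [LinearOrder K] [IsStrictOrderedRing K]
    {A : ι → ι → K} {S : Finset ι} {w : ι → K} {d η α : K}
    (hA : ∀ i ∈ S, ∀ j ∈ S, 0 ≤ A i j)
    (hrow : ∀ i ∈ S, ∑ j ∈ S, A i j = d) (hcol : ∀ j ∈ S, ∑ i ∈ S, A i j = d)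
    (hη : 0 < η) (hα : 0 < α) (hw : ∀ i ∈ S, w i ≤ 1)
    (hsum : (#S : K) * (1 - η) ≤ ∑ i ∈ S, w i) :
    (#S * d / 2) * (1 - 2 / α) ≤
      (1 / 2) * ∑ i ∈ S with 1 - α * η ≤ w i, ∑ j ∈ S with 1 - α * η ≤ w j, A i j := by
  classical
  obtain rfl | ⟨v, hv⟩ := S.eq_empty_or_nonempty
  · simp
  have hd : 0 ≤ d := hrow v hv ▸ sum_nonneg (hA v hv)
  set Q := {i ∈ S | w i < 1 - α * η} with hQ
  have hQS : Q ⊆ S := filter_subset _ _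
  have hcard : (#Q : K) * d ≤ #S / α * d := by
    gcongr
    calc
      (#Q : K) ≤ #{i ∈ S | w i ≤ 1 - α * η} :=
        mod_cast card_le_card (monotone_filter_right S fun _ _ ↦ le_of_lt)
      _ ≤ #S / α := card_filter_le_one_sub_mul_le_div hη hα hw hsum
  have hcompl : {i ∈ S | 1 - α * η ≤ w i} = S \ Q := by
    simp only [hQ, ← filter_not, not_lt]
  have hedges := card_sub_two_mul_card_mul_le_sum_sdiff hQS
    (fun i hi j hj ↦ hA i (hQS hi) j (hQS hj)) hrow fun j hj ↦ hcol j (hQS hj)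
  rw [hcompl]
  calc
    (#S * d / 2) * (1 - 2 / α) = #S * d / 2 - #S / α * d := by ring
    _ ≤ #S * d / 2 - #Q * d := by gcongr
    _ = (1 / 2) * ((#S - 2 * #Q) * d) := by ring
    _ ≤ (1 / 2) * ∑ i ∈ S \ Q, ∑ j ∈ S \ Q, A i j := by gcongr

theorem stmt_16 {n m : ℕ} (hn : 1 ≤ n) (k : ℕ) (hk : 0 < k)
    (A : Matrix (Fin n) (Fin n) ℝ) (hAsymm : A.IsSymm) (hAnn : ∀ i j, 0 ≤ A i j)
    (X : Fin n → EuclideanSpace ℝ (Fin m)) (I : EuclideanSpace ℝ (Fin m))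
    (hsum : ∑ i, ‖X i‖ ^ 2 = (k : ℝ))
    (hrow : ∀ i, ∑ j, ⟪X i, X j⟫ ≤ (k : ℝ) * ‖X i‖ ^ 2)
    (hnn : ∀ i j, 0 ≤ ⟪X i, X j⟫)
    (hle1 : ∀ i j, ⟪X i, X j⟫ ≤ ‖X i‖ ^ 2)
    (hle2 : ∀ i j, ⟪X i, X j⟫ ≤ ‖X j‖ ^ 2)
    (hnorm1 : ∀ i, ‖X i‖ ^ 2 ≤ 1)
    (hXI : ∀ i, ⟪X i, I⟫ = ‖X i‖ ^ 2)
    (hInorm : ‖I‖ = 1)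
    (S : Finset (Fin n)) (hS : S.card = k)
    (d η' α : ℝ) (hd : 0 < d) (hη' : 0 < η') (hα : 1 < α)
    (hreg : ∀ i ∈ S, ∑ j ∈ S, A i j = d)
    (havg : 1 - η' ≤ (1 / (k : ℝ)) * ∑ i ∈ S, ‖X i‖ ^ 2)
    (T : Finset (Fin n)) (hT : T = Finset.univ.filter (fun i => 1 - α * η' ≤ ‖X i‖ ^ 2)) :
    ((k : ℝ) * d / 2) * (1 - 2 / α) ≤ (1 / 2) * ∑ i ∈ T ∩ S, ∑ j ∈ T ∩ S, A i j := by
  subst hS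
  rw [one_div_mul_eq_div, le_div_iff₀' (by positivity)] at havg
  rw [hT, filter_inter, univ_inter]
  exact stmt_16_general (fun i _ j _ ↦ hAnn i j) hreg
    (fun j hj ↦ by simpa only [hAsymm.apply] using hreg j hj) hη' (by positivity)
    (fun i _ ↦ hnorm1 i) havg
end

section
/- Let {X_i}_{i∈V} together with I be a feasible SDP solution for the Densest k-Subgraph relaxation, where k is a positive integer, let S ⊆ V with |S| = k, and let γ, d > 0 be reals. Suppose that for every nonempty subset W ⊆ V∖S one has ρ(W) ≤ γd·|W|. Then Σ_{i∈V∖S} Σ_{j∈V∖S} A_{ij} ⟨X_i, X_j⟩ ≤ 2γdk·(1 − (1/k) Σ_{i∈S} ‖X_i‖²). -/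
open RealInnerProductSpace Finset

/-!
Since `⟪X i, X j⟫ ≤ min (‖X i‖ ^ 2) (‖X j‖ ^ 2)`, it is enough to bound the quadratic form of `A`
on `Sᶜ` with the weights `min (y i) (y j)`, where `y i = ‖X i‖ ^ 2`. Such a form is a nonnegative
combination of the total weights `∑ i ∈ W, ∑ j ∈ W, A i j` over the superlevel sets `W` of `y`:
lowering `y` by its minimum peels off the full vertex set, and the minimizing vertex then drops out.
The density bound applies to each `W`, and the same peeling of `∑ i, y i` reassembles the
right-hand side.
-/

theorem sum_eq_sum_erase_sub_add_card_nsmul {ι M : Type*} [DecidableEq ι] [AddCommGroup M]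
    (T : Finset ι) (y : ι → M) (p : ι) :
    ∑ i ∈ T, y i = ∑ i ∈ T.erase p, (y i - y p) + #T • y p := by
  rw [sum_erase _ (sub_self _), sum_sub_distrib, sum_const, sub_add_cancel]

section LayerCake

variable {ι R M : Type*} [Semiring R] [AddCommGroup M] [LinearOrder M] [IsOrderedAddMonoid M]
  [Module R M] {T : Finset ι} {y : ι → M}

theorem sum_sum_smul_min_eq_sum_erase_add [DecidableEq ι] (A : ι → ι → R) {p : ι}
    (hmin : ∀ i ∈ T, y p ≤ y i) :
    ∑ i ∈ T, ∑ j ∈ T, A i j • min (y i) (y j) =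
      ∑ i ∈ T.erase p, ∑ j ∈ T.erase p, A i j • min (y i - y p) (y j - y p) +
        (∑ i ∈ T, ∑ j ∈ T, A i j) • y p := by
  have row_eq_zero : ∑ j ∈ T, A p j • min (y p - y p) (y j - y p) = 0 :=
    sum_eq_zero fun j hj => by rw [min_sub_sub_right, min_eq_left (hmin j hj), sub_self, smul_zero]
  have column_eq_zero (i) (hi : i ∈ T) : A i p • min (y i - y p) (y p - y p) = 0 := by
    rw [min_sub_sub_right, min_eq_right (hmin i hi), sub_self, smul_zero]
  have erase_eq : ∑ i ∈ T.erase p, ∑ j ∈ T.erase p, A i j • min (y i - y p) (y j - y p) =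
      ∑ i ∈ T, ∑ j ∈ T, A i j • min (y i - y p) (y j - y p) := by
    rw [← sum_erase T row_eq_zero]
    exact sum_congr rfl fun i hi => sum_erase T (column_eq_zero i (mem_of_mem_erase hi))
  rw [erase_eq]
  simp only [sum_smul, ← sum_add_distrib, ← smul_add, min_sub_sub_right, sub_add_cancel]

variable [Preorder R] {A : ι → ι → R} {c : R}

theorem sum_sum_smul_min_le [SMulPosMono R M] (hy : ∀ i ∈ T, 0 ≤ y i)
    (hA : ∀ W ⊆ T, W.Nonempty → ∑ i ∈ W, ∑ j ∈ W, A i j ≤ c * #W) :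
    ∑ i ∈ T, ∑ j ∈ T, A i j • min (y i) (y j) ≤ c • ∑ i ∈ T, y i := by
  classical
  induction T using Finset.eraseInduction generalizing y with
  | H T ih =>
    obtain rfl | hT := T.eq_empty_or_nonempty
    · simp
    obtain ⟨p, hp, hmin⟩ := T.exists_min_image y hT
    have erase_le : ∑ i ∈ T.erase p, ∑ j ∈ T.erase p, A i j • min (y i - y p) (y j - y p) ≤
        c • ∑ i ∈ T.erase p, (y i - y p) :=
      ih p hp (fun i hi => sub_nonneg.2 (hmin i (mem_of_mem_erase hi)))
        fun W hW => hA W (hW.trans (erase_subset p T))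
    calc
      _ = ∑ i ∈ T.erase p, ∑ j ∈ T.erase p, A i j • min (y i - y p) (y j - y p) +
          (∑ i ∈ T, ∑ j ∈ T, A i j) • y p := sum_sum_smul_min_eq_sum_erase_add A hmin
      _ ≤ c • ∑ i ∈ T.erase p, (y i - y p) + (c * #T) • y p :=
        add_le_add erase_le (smul_le_smul_of_nonneg_right (hA T subset_rfl hT) (hy p hp))
      _ = c • ∑ i ∈ T, y i := by
        rw [sum_eq_sum_erase_sub_add_card_nsmul T y p, smul_add, mul_smul, Nat.cast_smul_eq_nsmul]

theorem sum_sum_smul_le_of_le_min [IsOrderedModule R M] {G : ι → ι → M}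
    (hA₀ : ∀ i ∈ T, ∀ j ∈ T, 0 ≤ A i j) (hG : ∀ i ∈ T, ∀ j ∈ T, G i j ≤ min (y i) (y j))
    (hy : ∀ i ∈ T, 0 ≤ y i)
    (hA : ∀ W ⊆ T, W.Nonempty → ∑ i ∈ W, ∑ j ∈ W, A i j ≤ c * #W) :
    ∑ i ∈ T, ∑ j ∈ T, A i j • G i j ≤ c • ∑ i ∈ T, y i :=
  (sum_le_sum fun i hi => sum_le_sum fun j hj =>
    smul_le_smul_of_nonneg_left (hG i hi j hj) (hA₀ i hi j hj)).trans (sum_sum_smul_min_le hy hA)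

end LayerCake

theorem stmt_18_general {V E : Type*} [Fintype V] [DecidableEq V] [SeminormedAddCommGroup E]
    [InnerProductSpace ℝ E] {k : ℝ} (hk : k ≠ 0) {A : Matrix V V ℝ} (hAnn : ∀ i j, 0 ≤ A i j)
    {X : V → E} (hsum : ∑ i, ‖X i‖ ^ 2 = k) (hle : ∀ i j, ⟪X i, X j⟫ ≤ ‖X i‖ ^ 2)
    {S : Finset V} {γ d : ℝ}
    (hdense : ∀ W ⊆ Sᶜ, W.Nonempty →
      (1 / 2) * ∑ i ∈ W, ∑ j ∈ W, A i j ≤ γ * d * (W.card : ℝ)) :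
    ∑ i ∈ Sᶜ, ∑ j ∈ Sᶜ, A i j * ⟪X i, X j⟫ ≤
      2 * γ * d * k * (1 - (1 / k) * ∑ i ∈ S, ‖X i‖ ^ 2) := by
  have inner_le_min (i j : V) : ⟪X i, X j⟫ ≤ min (‖X i‖ ^ 2) (‖X j‖ ^ 2) :=
    le_min (hle i j) (real_inner_comm (X i) (X j) ▸ hle j i)
  have weight_le (W : Finset V) (hW : W ⊆ Sᶜ) (hne : W.Nonempty) :
      ∑ i ∈ W, ∑ j ∈ W, A i j ≤ 2 * γ * d * #W := by
    linarith [hdense W hW hne]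
  calc
    _ ≤ 2 * γ * d * ∑ i ∈ Sᶜ, ‖X i‖ ^ 2 :=
      sum_sum_smul_le_of_le_min (fun i _ j _ => hAnn i j) (fun i _ j _ => inner_le_min i j)
        (fun i _ => sq_nonneg ‖X i‖) weight_le
    _ = 2 * γ * d * (k - ∑ i ∈ S, ‖X i‖ ^ 2) := by
      rw [← hsum, ← sum_add_sum_compl S, add_sub_cancel_left]
    _ = 2 * γ * d * k * (1 - (1 / k) * ∑ i ∈ S, ‖X i‖ ^ 2) := by field_simp

theorem stmt_18 {n m : ℕ} (hn : 1 ≤ n) (k : ℕ) (hk : 0 < k)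
    (A : Matrix (Fin n) (Fin n) ℝ) (hAsymm : A.IsSymm) (hAnn : ∀ i j, 0 ≤ A i j)
    (X : Fin n → EuclideanSpace ℝ (Fin m)) (I : EuclideanSpace ℝ (Fin m))
    (hsum : ∑ i, ‖X i‖ ^ 2 = (k : ℝ))
    (hrow : ∀ i, ∑ j, ⟪X i, X j⟫ ≤ (k : ℝ) * ‖X i‖ ^ 2)
    (hnn : ∀ i j, 0 ≤ ⟪X i, X j⟫)
    (hle1 : ∀ i j, ⟪X i, X j⟫ ≤ ‖X i‖ ^ 2)
    (hle2 : ∀ i j, ⟪X i, X j⟫ ≤ ‖X j‖ ^ 2)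
    (hnorm1 : ∀ i, ‖X i‖ ^ 2 ≤ 1)
    (hXI : ∀ i, ⟪X i, I⟫ = ‖X i‖ ^ 2)
    (hInorm : ‖I‖ = 1)
    (S : Finset (Fin n)) (hS : S.card = k)
    (γ d : ℝ) (hγ : 0 < γ) (hd : 0 < d)
    (hdense : ∀ W ⊆ Sᶜ, W.Nonempty →
      (1 / 2) * ∑ i ∈ W, ∑ j ∈ W, A i j ≤ γ * d * (W.card : ℝ)) :
    ∑ i ∈ Sᶜ, ∑ j ∈ Sᶜ, A i j * ⟪X i, X j⟫ ≤
      2 * γ * d * (k : ℝ) * (1 - (1 / (k : ℝ)) * ∑ i ∈ S, ‖X i‖ ^ 2) :=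
  stmt_18_general (Nat.cast_ne_zero.2 hk.ne') hAnn hsum hle1 hdense
end
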